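/- arXiv:2209.02640 — 2 statements merged into one kernel-verified Lean document; each statement's English description precedes it below -/
import Mathlib

section
/- For every finite simple graph G on a nonempty finite vertex set V, there exists a polynomial P with integer coefficients, monic of degree |V|, such that for every natural number k, the number of proper k-colorings of G equals P evaluated at k. -/
/-!
The color classes of a proper coloring partition `V` into independent sets, and the colorings that
induce a given partition into `m` blocks are the injections from its blocks to the colors. Hence the
number of proper `k`-colorings is the sum over all such partitions of the falling factorial
`k (k - 1) ⋯ (k - m + 1)`, a monic polynomial of degree `m` in `k`. Only the partition into
singletons has `|V|` blocks, so its term alone determines the leading term of the sum.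
-/

open Polynomial

theorem isMonicOfDegree_descPochhammer (R : Type*) [Ring R] [NoZeroDivisors R] [Nontrivial R]
    (n : ℕ) : IsMonicOfDegree (descPochhammer R n) n :=
  ⟨descPochhammer_natDegree R n, monic_descPochhammer R n⟩

theorem isMonicOfDegree_sum_of_degree_lt {R ι : Type*} [Semiring R] {s : Finset ι}
    {f : ι → R[X]} {n : ℕ} {i : ι} (hi : i ∈ s) (hfi : IsMonicOfDegree (f i) n)
    (hlt : ∀ j ∈ s, j ≠ i → (f j).degree < n) : IsMonicOfDegree (∑ j ∈ s, f j) n := by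
  obtain _ | _ := subsingleton_or_nontrivial R
  · simpa only [isMonicOfDegree_iff_of_subsingleton] using hfi
  rw [isMonicOfDegree_iff]
  constructor
  · refine natDegree_sum_le_of_forall_le s f fun j hj => ?_
    obtain rfl | hji := eq_or_ne j i
    · exact hfi.natDegree_eq.le
    · exact natDegree_le_of_degree_le (hlt j hj hji).le
  · rw [finsetSum_coeff, Finset.sum_eq_single_of_mem i hi fun j hj hji =>
      coeff_eq_zero_of_degree_lt (hlt j hj hji)]
    exact ((isMonicOfDegree_iff _ _).1 hfi).2

theorem card_embedding_eq_descFactorial (α β : Type*) [Finite α] [Finite β] :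
    Nat.card (α ↪ β) = (Nat.card β).descFactorial (Nat.card α) := by
  have := Fintype.ofFinite α
  have := Fintype.ofFinite β
  simp only [Nat.card_eq_fintype_card, Fintype.card_embedding_eq]

instance finite_setoid {α : Type*} [Finite α] : Finite (Setoid α) :=
  Finite.of_injective (fun r : Setoid α => (r : α → α → Prop)) fun _ _ h => Setoid.eq_iff_rel_eq.2 h

theorem card_quotient_lt_of_ne_bot {α : Type*} [Finite α] {r : Setoid α} (hr : r ≠ ⊥) :
    Nat.card (Quotient r) < Nat.card α := by
  contrapose! hr
  have mk_injective : Function.Injective (Quotient.mk r) :=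
    (Quotient.mk_surjective.bijective_of_nat_card_le hr).1
  rw [← Setoid.ker_mk_eq r]
  exact Setoid.ker_eq_bot_iff.2 mk_injective

section Chromatic

variable {V : Type*} {G : SimpleGraph V} {α : Type*}

/-- The partitions of the vertices of `G` into independent sets, encoded as the equivalence
relations that relate no two adjacent vertices. -/
abbrev StablePartition (G : SimpleGraph V) : Type _ :=
  {r : Setoid V // ∀ ⦃v w⦄, G.Adj v w → ¬ r v w}

namespace StablePartition

noncomputable instance [Finite V] : Fintype (StablePartition G) :=
  Fintype.ofFinite _

instance : Bot (StablePartition G) :=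
  ⟨⊥, fun _ _ h => h.ne⟩

/-- The partition of the vertices into the color classes of a coloring. -/
def ofColoring (c : G.Coloring α) : StablePartition G :=
  ⟨Setoid.ker c, fun _ _ h => c.valid h⟩

/-- Colorings with prescribed color classes correspond to injective assignments of colors to the
classes. -/
def ofColoringFiberEquiv (r : StablePartition G) :
    {c : G.Coloring α // ofColoring c = r} ≃ (Quotient r.1 ↪ α) where
  toFun c :=
    have ker_eq : Setoid.ker c.1 = r.1 := congrArg Subtype.val c.2
    ⟨Quotient.lift c.1 ker_eq.ge, (Setoid.lift_injective_iff_ker_eq_of_le ker_eq.ge).2 ker_eq⟩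
  invFun e :=
    ⟨.mk (fun v => e ⟦v⟧) fun h he => r.2 h (Quotient.exact (e.injective he)),
      Subtype.ext <| Setoid.ext fun _ _ => e.injective.eq_iff.trans Quotient.eq⟩
  left_inv _ := rfl
  right_inv _ := by ext ⟨v⟩; rfl

end StablePartition

theorem card_coloring_eq_sum_descFactorial [Finite V] [Finite α] :
    Nat.card (G.Coloring α) =
      ∑ r : StablePartition G, (Nat.card α).descFactorial (Nat.card (Quotient r.1)) :=
  calc Nat.card (G.Coloring α)
    _ = ∑ r, Nat.card {c : G.Coloring α // StablePartition.ofColoring c = r} := by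
      rw [← Nat.card_sigma, Nat.card_congr (Equiv.sigmaFiberEquiv _)]
    _ = ∑ r : StablePartition G, Nat.card (Quotient r.1 ↪ α) :=
      Finset.sum_congr rfl fun r _ => Nat.card_congr r.ofColoringFiberEquiv
    _ = ∑ r : StablePartition G, (Nat.card α).descFactorial (Nat.card (Quotient r.1)) := by
      simp only [card_embedding_eq_descFactorial]

/-- The chromatic polynomial of a finite graph, defined by its expansion in falling factorials
rather than by its values. -/
noncomputable def chromaticPolynomial [Finite V] (G : SimpleGraph V) : ℤ[X] :=
  ∑ r : StablePartition G, descPochhammer ℤ (Nat.card (Quotient r.1))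

theorem eval_chromaticPolynomial [Finite V] [Finite α] :
    (chromaticPolynomial G).eval (Nat.card α : ℤ) = Nat.card (G.Coloring α) := by
  simp only [chromaticPolynomial, eval_finsetSum, descPochhammer_eval_eq_descFactorial,
    card_coloring_eq_sum_descFactorial, Nat.cast_sum]

theorem isMonicOfDegree_chromaticPolynomial [Finite V] :
    IsMonicOfDegree (chromaticPolynomial G) (Nat.card V) := by
  refine isMonicOfDegree_sum_of_degree_lt (Finset.mem_univ ⊥) ?_ fun r _ hr => ?_
  · have card_singletons : Nat.card (Quotient (⊥ : StablePartition G).1) = Nat.card V :=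
      Nat.card_congr Setoid.quotientBotEquiv
    exact card_singletons ▸ isMonicOfDegree_descPochhammer ℤ _
  · have card_blocks_lt : Nat.card (Quotient r.1) < Nat.card V :=
      card_quotient_lt_of_ne_bot fun h => hr (Subtype.ext h)
    rw [degree_eq_natDegree (monic_descPochhammer ℤ _).ne_zero, descPochhammer_natDegree]
    exact_mod_cast card_blocks_lt

end Chromatic

/-- **Chromatic polynomial exists.** For every finite simple graph `G` on a nonempty finite
vertex set `V`, there is a monic integer polynomial `P` of degree `|V|` such that for every
natural number `k`, the number of proper `k`-colorings of `G` equals `P(k)`. -/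
theorem chromatic_polynomial_exists {V : Type*} [Fintype V] [Nonempty V]
    (G : SimpleGraph V) :
    ∃ P : Polynomial ℤ, P.Monic ∧ P.natDegree = Fintype.card V ∧
      ∀ k : ℕ, (Nat.card (G.Coloring (Fin k)) : ℤ) = P.eval (k : ℤ) := by
  have hG : IsMonicOfDegree (chromaticPolynomial G) (Fintype.card V) :=
    Nat.card_eq_fintype_card (α := V) ▸ isMonicOfDegree_chromaticPolynomial
  refine ⟨chromaticPolynomial G, hG.monic, hG.natDegree_eq, fun k => ?_⟩
  rw [← eval_chromaticPolynomial, Nat.card_fin]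
end

section
/- Let G be a finite simple graph on a finite vertex set V with |V| = n, and let P be its chromatic polynomial (the unique integer polynomial with P(k) equal to the number of proper k-colorings for all natural numbers k). Then the coefficients of P alternate in sign: for every 0 ≤ i ≤ n, (−1)^{n−i} times the coefficient of X^i in P is nonnegative. -/
/-!
Let `a ≠ b` be nonadjacent vertices of `G`. A proper coloring of `G` either separates `a` from `b`,
and is then a proper coloring of `G + ab`, or gives them the same color, and is then a proper
coloring of the graph `G / ab` in which `b` is identified with `a`. Hence
`P(G + ab) = P(G) - P(G / ab)`. Since `G / ab` has one vertex fewer, its coefficients have signs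
opposite to those of `P(G)`, so the subtraction produces no cancellation. Starting from
`P(⊥) = X ^ n`, edges are added one at a time, inside an induction on the number of vertices.
-/

open Polynomial SimpleGraph

section SignAlternation

variable {R : Type*} [Ring R] [PartialOrder R]

/-- The coefficients of `P` alternate in sign, the one of `X ^ n` being nonnegative. Coefficients
are allowed to vanish, and the parity of `n - i` is encoded as that of `n + i` so that indices
`i > n` are covered too. -/
def AlternatesInSign (n : ℕ) (P : R[X]) : Prop :=
  ∀ i, 0 ≤ (-1) ^ (n + i) * P.coeff i

namespace AlternatesInSign

theorem X_pow [ZeroLEOneClass R] (n : ℕ) : AlternatesInSign n (X ^ n : R[X]) := by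
  intro i
  rw [coeff_X_pow]
  split_ifs with h
  · simp [h, Even.neg_one_pow (Even.add_self n)]
  · simp

theorem sub [IsOrderedAddMonoid R] {n : ℕ} {P Q : R[X]} (hP : AlternatesInSign (n + 1) P)
    (hQ : AlternatesInSign n Q) : AlternatesInSign (n + 1) (P - Q) := by
  intro i
  have opposite_sign : (-1 : R) ^ (n + 1 + i) = -(-1) ^ (n + i) := by
    rw [add_right_comm, pow_succ, mul_neg_one]
  calc
    0 ≤ (-1) ^ (n + 1 + i) * P.coeff i + (-1) ^ (n + i) * Q.coeff i := add_nonneg (hP i) (hQ i)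
    _ = (-1) ^ (n + 1 + i) * (P - Q).coeff i := by
      rw [coeff_sub, mul_sub, opposite_sign, neg_mul, neg_mul, sub_neg_eq_add]

theorem neg_one_pow_sub_mul_coeff_nonneg {n : ℕ} {P : R[X]} (hP : AlternatesInSign n P) {i : ℕ}
    (hi : i ≤ n) : 0 ≤ (-1) ^ (n - i) * P.coeff i := by
  have same_sign : (-1 : R) ^ (n + i) = (-1) ^ (n - i) :=
    neg_one_pow_congr (by rw [Nat.even_sub hi, Nat.even_add])
  exact same_sign ▸ hP i

end AlternatesInSign

end SignAlternation

section Colorings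

variable {V W α : Type*} {G : SimpleGraph V} {a b : V}

/-- Proper colorings of the image of `G` under a surjection `f` are the proper colorings of `G`
that are constant on the fibres of `f`. No edge may lie inside a fibre, since `SimpleGraph.map`
drops loops. -/
noncomputable def coloringMapEquiv {f : V → W} (hf : f.Surjective)
    (hadj : ∀ {u v}, G.Adj u v → f u ≠ f v) :
    (G.map f).Coloring α ≃ {c : G.Coloring α // Function.FactorsThrough c f} where
  toFun c := ⟨c.comp (Hom.map f G hadj), fun _ _ huv ↦ congrArg c huv⟩
  invFun c := Coloring.mk (c.1 ∘ Function.surjInv hf) <| by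
    rintro _ _ ⟨-, u, v, huv, rfl, rfl⟩
    have color_surjInv (w : V) : c.1 (Function.surjInv hf (f w)) = c.1 w :=
      c.2 (Function.surjInv_eq hf (f w))
    simpa only [Function.comp_apply, color_surjInv] using c.1.valid huv
  left_inv c := RelHom.ext fun w ↦ congrArg c (Function.surjInv_eq hf w)
  right_inv c := Subtype.ext <| RelHom.ext fun v ↦ c.2 (Function.surjInv_eq hf (f v))

/-- Proper colorings of `G + ab` are the proper colorings of `G` that separate `a` from `b`. -/
def coloringSupEdgeEquiv (hab : a ≠ b) :
    (G ⊔ edge a b).Coloring α ≃ {c : G.Coloring α // c a ≠ c b} where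
  toFun c := ⟨c.comp (Hom.ofLE le_sup_left), c.valid (by simp [edge_adj, hab])⟩
  invFun c := Coloring.mk c.1 <| by
    intro u v huv
    rw [sup_adj, edge_adj] at huv
    rcases huv with huv | ⟨⟨rfl, rfl⟩ | ⟨rfl, rfl⟩, -⟩
    exacts [c.1.valid huv, c.2, c.2.symm]
  left_inv _ := rfl
  right_inv _ := rfl

variable [DecidableEq V]

/-- The quotient map identifying `b` with `a`, whose target is modelled as the set of vertices
other than `b`. The contraction `G / ab` is the image of `G` under this map. -/
def identifyVertex (hab : a ≠ b) (v : V) : {v : V // v ≠ b} :=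
  if hv : v = b then ⟨a, hab⟩ else ⟨v, hv⟩

theorem identifyVertex_of_ne (hab : a ≠ b) {v : V} (hv : v ≠ b) :
    identifyVertex hab v = ⟨v, hv⟩ :=
  dif_neg hv

theorem identifyVertex_right (hab : a ≠ b) : identifyVertex hab b = ⟨a, hab⟩ :=
  dif_pos rfl

theorem identifyVertex_surjective (hab : a ≠ b) : (identifyVertex hab).Surjective :=
  fun v ↦ ⟨v, identifyVertex_of_ne hab v.2⟩

theorem factorsThrough_identifyVertex_iff (hab : a ≠ b) {c : V → α} :
    c.FactorsThrough (identifyVertex hab) ↔ c a = c b := by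
  refine ⟨fun hc ↦ hc ?_, fun hc ↦ ?_⟩
  · rw [identifyVertex_of_ne hab hab, identifyVertex_right]
  · have color_identifyVertex (v : V) : c (identifyVertex hab v) = c v := by
      by_cases hv : v = b
      · rw [hv, identifyVertex_right, hc]
      · rw [identifyVertex_of_ne hab hv]
    intro u v huv
    rw [← color_identifyVertex u, huv, color_identifyVertex]

theorem identifyVertex_ne_of_adj (hab : a ≠ b) (hnadj : ¬G.Adj a b) {u v : V} (huv : G.Adj u v) :
    identifyVertex hab u ≠ identifyVertex hab v := by
  intro h
  rcases eq_or_ne u b with rfl | hu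
  · rw [identifyVertex_right, identifyVertex_of_ne hab huv.ne', Subtype.mk.injEq] at h
    exact hnadj (h ▸ huv.symm)
  rcases eq_or_ne v b with rfl | hv
  · rw [identifyVertex_of_ne hab hu, identifyVertex_right, Subtype.mk.injEq] at h
    exact hnadj (h ▸ huv)
  · rw [identifyVertex_of_ne hab hu, identifyVertex_of_ne hab hv, Subtype.mk.injEq] at h
    exact huv.ne h

theorem card_coloring_eq_card_sup_edge_add_card_map_identifyVertex [Finite V] [Finite α]
    (hab : a ≠ b) (hnadj : ¬G.Adj a b) :
    Nat.card (G.Coloring α) = Nat.card ((G ⊔ edge a b).Coloring α) +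
      Nat.card ((G.map (identifyVertex hab)).Coloring α) := by
  classical
  have separating : {c : G.Coloring α // c a ≠ c b} ≃ (G ⊔ edge a b).Coloring α :=
    (coloringSupEdgeEquiv hab).symm
  have identifying : {c : G.Coloring α // ¬c a ≠ c b} ≃
      (G.map (identifyVertex hab)).Coloring α :=
    (Equiv.subtypeEquivRight fun c ↦ by rw [not_ne_iff, factorsThrough_identifyVertex_iff]).trans
      (coloringMapEquiv (identifyVertex_surjective hab) (identifyVertex_ne_of_adj hab hnadj)).symm
  rw [← Nat.card_congr (Equiv.sumCompl fun c : G.Coloring α ↦ c a ≠ c b), Nat.card_sum,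
    Nat.card_congr separating, Nat.card_congr identifying]

end Colorings

section ChromaticPolynomial

variable {V : Type*} {G : SimpleGraph V}

/-- `P` is the chromatic polynomial of `G`: its value at each natural number `k` is the number of
proper `k`-colorings of `G`. -/
def IsChromaticPolynomial (G : SimpleGraph V) (P : ℤ[X]) : Prop :=
  ∀ k : ℕ, P.eval (k : ℤ) = (Nat.card (G.Coloring (Fin k)) : ℤ)

namespace IsChromaticPolynomial

theorem unique {P Q : ℤ[X]} (hP : IsChromaticPolynomial G P) (hQ : IsChromaticPolynomial G Q) :
    P = Q := by
  refine eq_of_infinite_eval_eq P Q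
    ((Set.infinite_range_of_injective (Nat.cast_injective (R := ℤ))).mono ?_)
  rintro _ ⟨k, rfl⟩
  exact (hP k).trans (hQ k).symm

theorem bot [Finite V] : IsChromaticPolynomial (⊥ : SimpleGraph V) (X ^ Nat.card V) := by
  intro k
  have coloring_equiv : (⊥ : SimpleGraph V).Coloring (Fin k) ≃ (V → Fin k) :=
    { toFun := fun c ↦ c
      invFun := fun c ↦ Coloring.mk c fun h ↦ h.elim
      left_inv := fun _ ↦ rfl
      right_inv := fun _ ↦ rfl }
  simp [Nat.card_congr coloring_equiv, Nat.card_fun]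

theorem sup_edge [Finite V] [DecidableEq V] {a b : V} (hab : a ≠ b) (hnadj : ¬G.Adj a b)
    {P Q : ℤ[X]} (hP : IsChromaticPolynomial G P)
    (hQ : IsChromaticPolynomial (G.map (identifyVertex hab)) Q) :
    IsChromaticPolynomial (G ⊔ edge a b) (P - Q) := by
  intro k
  rw [eval_sub, hP, hQ, card_coloring_eq_card_sup_edge_add_card_map_identifyVertex hab hnadj,
    Nat.cast_add, add_sub_cancel_right]

end IsChromaticPolynomial

theorem simpleGraph_edge_induction [Finite V] {motive : SimpleGraph V → Prop} (bot : motive ⊥)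
    (sup_edge : ∀ (G : SimpleGraph V) (a b : V), a ≠ b → ¬G.Adj a b → motive G →
      motive (G ⊔ edge a b)) (G : SimpleGraph V) : motive G := by
  induction G using WellFoundedLT.induction with
  | ind G ih =>
    by_cases hG : G = ⊥
    · exact hG ▸ bot
    obtain ⟨a, b, hab⟩ := ne_bot_iff_exists_adj.mp hG
    have hnadj : ¬(G \ edge a b).Adj a b := by simp [edge_adj, hab.ne]
    have restore : G \ edge a b ⊔ edge a b = G :=
      sdiff_sup_cancel ((edge_le_iff G).mpr (Or.inr hab))
    have deleted_lt : G \ edge a b < G := by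
      simpa only [restore] using lt_sup_edge (G \ edge a b) a b hab.ne hnadj
    exact restore ▸ sup_edge _ a b hab.ne hnadj (ih _ deleted_lt)

theorem exists_isChromaticPolynomial_alternatesInSign [Finite V] (G : SimpleGraph V) :
    ∃ P, IsChromaticPolynomial G P ∧ AlternatesInSign (Nat.card V) P := by
  classical
  induction hn : Nat.card V generalizing V with
  | zero =>
    have : IsEmpty V := Finite.card_eq_zero_iff.mp hn
    obtain rfl := Subsingleton.elim G ⊥
    exact ⟨X ^ 0, hn ▸ .bot, .X_pow 0⟩
  | succ n ih =>
    induction G using simpleGraph_edge_induction with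
    | bot => exact ⟨X ^ (n + 1), hn ▸ .bot, .X_pow (n + 1)⟩
    | sup_edge G a b hab hnadj ihG =>
      obtain ⟨P, hP, hPsign⟩ := ihG
      have card_contraction : Nat.card {v : V // v ≠ b} = n := by
        rwa [← Nat.card_congr (Equiv.optionSubtypeNe b), Finite.card_option,
          Nat.add_right_cancel_iff] at hn
      obtain ⟨Q, hQ, hQsign⟩ := ih (G.map (identifyVertex hab)) card_contraction
      exact ⟨P - Q, hP.sup_edge hab hnadj hQ, hPsign.sub hQsign⟩

end ChromaticPolynomial

/-- **Alternating signs of chromatic polynomial coefficients.** If `P` is the chromatic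
polynomial of a finite simple graph `G` on `n` vertices (i.e. `P(k)` is the number of proper
`k`-colorings for every natural `k`), then for every `0 ≤ i ≤ n` the number
`(−1)^(n−i) * (coefficient of Xⁱ in P)` is nonnegative. -/
theorem chromatic_polynomial_coeff_alternate {V : Type*} [Fintype V]
    (G : SimpleGraph V) (n : ℕ) (hn : n = Fintype.card V)
    (P : Polynomial ℤ)
    (hP : ∀ k : ℕ, P.eval (k : ℤ) = (Nat.card (G.Coloring (Fin k)) : ℤ)) :
    ∀ i ≤ n, 0 ≤ (-1 : ℤ) ^ (n - i) * P.coeff i := by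
  intro i hi
  obtain ⟨Q, hQ, hQsign⟩ := exists_isChromaticPolynomial_alternatesInSign G
  obtain rfl : P = Q := IsChromaticPolynomial.unique hP hQ
  rw [Nat.card_eq_fintype_card, ← hn] at hQsign
  exact hQsign.neg_one_pow_sub_mul_coeff_nonneg hi
end
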